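/- arXiv:math/9911090 — 3 statements merged into one kernel-verified Lean document; each statement's English description precedes it below -/
import Mathlib

section
/- Wick's theorem holds for conditioned expectations: for any indices i₁,…,i_P ∈ {1,…,n}, almost surely E[∏_{p=1}^P (u_{i_p} − E[u_{i_p}|V]) | V] equals 0 if P is odd, and equals the sum over all pairings {(j₁,j₂),…,(j_{P−1},j_P)} of the P indices of the products Σ^V_{i_{j₁} i_{j₂}} ⋯ Σ^V_{i_{j_{P−1}} i_{j_P}} if P is even, where Σ^V = A⁻¹ − A⁻¹Gᵀ(G A⁻¹ Gᵀ)⁻¹ G A⁻¹ is the conditional covariance matrix. -/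
open MeasureTheory Matrix Real
open scoped ProbabilityTheory

/-!
A Gaussian vector `u` with covariance `C` splits as `u = K V + R` where `V = G u` and the residual
`R = (1 - K G) u` has covariance `C - K G C` and is uncorrelated with `V`, hence independent of `V`.
Conditioning on `V` therefore turns the centred coordinates of `u` into those of `R`, and the claim
is Wick's formula for `R`. That formula follows by induction from Gaussian integration by parts
`E[(X a - E[X a]) F(X)] = ∑ q, cov(X a, X q) E[∂_q F(X)]`, the induction matching the classification
of the pairings by the partner of one chosen index; integration by parts is one-dimensional, since
`X p - c p X a` is independent of `X a` for a suitable constant `c p`.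

The density `exp(-(s, A s) / 2 + (b, s))` gives `C = A⁻¹` without diagonalizing `A`: multiplying it
by `exp (A c, s)` is, up to a constant factor, translating it by `c`, which computes all exponential
moments of `u`, and these determine the law of every linear form of `u`.
-/

section Pairings

open Finset

lemma swap_mul_apply_of_ne {α : Type*} [DecidableEq α] {σ : Equiv.Perm α} {a q x : α}
    (hσa : σ a = q) (hσq : σ q = a) (hxa : x ≠ a) (hxq : x ≠ q) : (Equiv.swap a q * σ) x = σ x := by
  rw [Equiv.Perm.mul_apply]
  refine Equiv.swap_apply_of_ne_of_ne (fun h ↦ hxq ?_) fun h ↦ hxa ?_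
  · exact σ.injective (h.trans hσq.symm)
  · exact σ.injective (h.trans hσa.symm)

variable {τ R : Type*} [Fintype τ] [LinearOrder τ] [CommSemiring R]

/-- The pairings of the elements of `S`, each encoded as the involution of the ambient type which
exchanges the two elements of every pair and fixes everything outside `S`. -/
def pairings (S : Finset τ) : Finset (Equiv.Perm τ) :=
  {σ | σ * σ = 1 ∧ σ.support = S}

/-- The sum over all pairings of `S` of the products of the weights `C x y` of the pairs
`{x, y}`, `x < y`: the Hafnian of `C` restricted to `S`, which is the right-hand side of Wick's
theorem. -/
def pairingSum (C : τ → τ → R) (S : Finset τ) : R :=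
  ∑ σ ∈ pairings S, ∏ x ∈ S with x < σ x, C x (σ x)

lemma mem_pairings {S : Finset τ} {σ : Equiv.Perm τ} :
    σ ∈ pairings S ↔ σ * σ = 1 ∧ σ.support = S := by
  simp [pairings]

lemma pairings_empty : pairings (∅ : Finset τ) = {1} := by
  ext σ
  simp +contextual [mem_pairings]

lemma pairings_univ :
    pairings (univ : Finset τ) =
      ({σ | ∀ x, σ (σ x) = x ∧ σ x ≠ x} : Finset (Equiv.Perm τ)) := by
  ext σ
  simp [mem_pairings, Equiv.ext_iff, Finset.ext_iff, forall_and]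

lemma swap_mul_mem_pairings_erase {S : Finset τ} {a : τ} {σ : Equiv.Perm τ}
    (hσ : σ ∈ pairings S) :
    Equiv.swap a (σ a) * σ ∈ pairings ((S.erase a).erase (σ a)) := by
  obtain ⟨hinv, hsupp⟩ := mem_pairings.1 hσ
  have hσσ : σ (σ a) = a := Equiv.congr_fun hinv a
  refine mem_pairings.2 ⟨?_, ?_⟩
  · have hcomm : σ * Equiv.swap a (σ a) = Equiv.swap a (σ a) * σ := by
      rw [Equiv.mul_swap_eq_swap_mul, hσσ, Equiv.swap_comm]
    rw [mul_assoc, ← mul_assoc σ, hcomm, mul_assoc, hinv, mul_one, Equiv.swap_mul_self]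
  · ext x
    rw [Equiv.Perm.mem_support, mem_erase, mem_erase, ← hsupp, Equiv.Perm.mem_support]
    by_cases hxa : x = a
    · simp [hxa]
    by_cases hxq : x = σ a
    · simp [hxq, hσσ]
    rw [swap_mul_apply_of_ne rfl hσσ hxa hxq]
    simp [hxa, hxq]

lemma swap_mul_mem_pairings {S : Finset τ} {a q : τ} {ρ : Equiv.Perm τ} (ha : a ∈ S)
    (hq : q ∈ S.erase a) (hρ : ρ ∈ pairings ((S.erase a).erase q)) :
    Equiv.swap a q * ρ ∈ pairings S ∧ (Equiv.swap a q * ρ) a = q := by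
  obtain ⟨hinv, hsupp⟩ := mem_pairings.1 hρ
  have hqa : q ≠ a := ne_of_mem_erase hq
  have hfix_a : ρ a = a := by simp [← Equiv.Perm.notMem_support, hsupp]
  have hdisj : (Equiv.swap a q).Disjoint ρ := by
    rw [Equiv.Perm.disjoint_iff_disjoint_support, hsupp, Equiv.Perm.support_swap hqa.symm,
      disjoint_left]
    aesop
  refine ⟨mem_pairings.2 ⟨?_, ?_⟩, by simp [hfix_a]⟩
  · rw [mul_assoc, ← mul_assoc ρ, ← hdisj.commute.eq, mul_assoc, hinv, mul_one,
      Equiv.swap_mul_self]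
  · rw [hdisj.support_mul, hsupp, Equiv.Perm.support_swap hqa.symm, insert_union,
      singleton_union, insert_erase hq, insert_erase ha]

lemma prod_pairs_eq_mul_prod_erase (C : τ → τ → R) {S : Finset τ} {a : τ} {σ : Equiv.Perm τ}
    (hσ : σ ∈ pairings S) (ha : a ∈ S) (hlt : a < σ a) :
    ∏ x ∈ S with x < σ x, C x (σ x) = C a (σ a) *
      ∏ x ∈ (S.erase a).erase (σ a) with x < (Equiv.swap a (σ a) * σ) x,
        C x ((Equiv.swap a (σ a) * σ) x) := by
  have hσσ : σ (σ a) = a := Equiv.congr_fun (mem_pairings.1 hσ).1 a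
  have hagree : ∀ x ∈ (S.erase a).erase (σ a), (Equiv.swap a (σ a) * σ) x = σ x := by
    intro x hx
    simp only [mem_erase] at hx
    exact swap_mul_apply_of_ne rfl hσσ hx.2.1 hx.1
  rw [← mul_prod_erase _ _ (mem_filter.2 ⟨ha, hlt⟩)]
  congr 1
  refine prod_congr ?_ fun x hx ↦ ?_
  · ext x
    simp only [mem_erase, mem_filter]
    grind
  · rw [hagree x (mem_filter.1 hx).1]

lemma pairingSum_empty (C : τ → τ → R) : pairingSum C ∅ = 1 := by
  simp [pairingSum, pairings_empty]

/-- Classify the pairings by the partner `q` of the least element `a`. -/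
lemma pairingSum_eq_sum_erase (C : τ → τ → R) {S : Finset τ} {a : τ} (ha : a ∈ S)
    (hmin : ∀ x ∈ S, a ≤ x) :
    pairingSum C S = ∑ q ∈ S.erase a, C a q * pairingSum C ((S.erase a).erase q) := by
  have hpartner : ∀ σ ∈ pairings S, σ a ∈ S.erase a := by
    intro σ hσ
    obtain ⟨-, rfl⟩ := mem_pairings.1 hσ
    exact mem_erase.2 ⟨Equiv.Perm.mem_support.1 ha, Equiv.Perm.apply_mem_support.2 ha⟩
  rw [pairingSum, ← sum_fiberwise_of_maps_to hpartner]
  refine sum_congr rfl fun q hq ↦ ?_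
  rw [pairingSum, mul_sum]
  refine sum_nbij' (Equiv.swap a q * ·) (Equiv.swap a q * ·) ?_ ?_ ?_ ?_ ?_
  · intro σ hσq
    obtain ⟨hσ, rfl⟩ := mem_filter.1 hσq
    exact swap_mul_mem_pairings_erase hσ
  · exact fun ρ hρ ↦ mem_filter.2 (swap_mul_mem_pairings ha hq hρ)
  · exact fun σ _ ↦ Equiv.swap_mul_self_mul a q σ
  · exact fun ρ _ ↦ Equiv.swap_mul_self_mul a q ρ
  · intro σ hσq
    obtain ⟨hσ, rfl⟩ := mem_filter.1 hσq
    obtain ⟨hne, hmem⟩ := mem_erase.1 hq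
    exact prod_pairs_eq_mul_prod_erase C hσ ha ((hmin _ hmem).lt_of_ne' hne)

lemma pairings_eq_empty_of_odd_card {S : Finset τ} (hS : Odd #S) : pairings S = ∅ := by
  refine eq_empty_of_forall_notMem fun σ hσ ↦ ?_
  obtain ⟨hinv, rfl⟩ := mem_pairings.1 hσ
  refine Nat.not_even_iff_odd.2 hS (even_iff_two_dvd.2 ?_)
  exact Equiv.Perm.two_dvd_card_support (by rw [sq, hinv])

lemma pairingSum_eq_zero_of_odd_card (C : τ → τ → R) {S : Finset τ} (hS : Odd #S) :
    pairingSum C S = 0 := by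
  simp [pairingSum, pairings_eq_empty_of_odd_card hS]

lemma pairingSum_univ (C : τ → τ → R) :
    pairingSum C univ = if Odd (Fintype.card τ) then 0 else
      ∑ σ : Equiv.Perm τ with ∀ x, σ (σ x) = x ∧ σ x ≠ x, ∏ x with x < σ x, C x (σ x) := by
  split_ifs with h
  · exact pairingSum_eq_zero_of_odd_card C (by rwa [card_univ])
  · rw [pairingSum, pairings_univ]

end Pairings

section IntegrationByParts

open ProbabilityTheory
open scoped ENNReal NNReal

lemma hasDerivAt_gaussianPDFReal (m : ℝ) {v : ℝ≥0} (hv : v ≠ 0) (x : ℝ) :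
    HasDerivAt (gaussianPDFReal m v) (-((x - m) / v) * gaussianPDFReal m v x) x := by
  have hv' : (v : ℝ) ≠ 0 := NNReal.coe_ne_zero.2 hv
  have hexponent : HasDerivAt (fun y : ℝ ↦ -(y - m) ^ 2 / (2 * v)) (-((x - m) / v)) x := by
    refine ((((hasDerivAt_id x).sub_const m).pow 2).neg.div_const (2 * (v : ℝ))).congr_deriv ?_
    simp only [id_eq]
    field_simp
    norm_num [mul_comm]
  rw [gaussianPDFReal_def]
  exact (hexponent.exp.const_mul (√(2 * π * v))⁻¹).congr_deriv (by ring)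

lemma integrable_gaussianReal_iff {m : ℝ} {v : ℝ≥0} (hv : v ≠ 0) {f : ℝ → ℝ} :
    Integrable f (gaussianReal m v) ↔ Integrable fun x ↦ gaussianPDFReal m v x * f x := by
  rw [gaussianReal_of_var_ne_zero m hv,
    integrable_withDensity_iff_integrable_smul' (measurable_gaussianPDF m v)
      (ae_of_all _ fun _ ↦ gaussianPDF_lt_top)]
  simp only [toReal_gaussianPDF, smul_eq_mul]

lemma integral_sub_mul_gaussianReal {m : ℝ} {v : ℝ≥0} {f f' : ℝ → ℝ}
    (hderiv : ∀ x, HasDerivAt f (f' x) x) (hf : Integrable f (gaussianReal m v))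
    (hf' : Integrable f' (gaussianReal m v))
    (hxf : Integrable (fun x ↦ (x - m) * f x) (gaussianReal m v)) :
    ∫ x, (x - m) * f x ∂gaussianReal m v = v * ∫ x, f' x ∂gaussianReal m v := by
  obtain rfl | hv := eq_or_ne v 0
  · simp [gaussianReal_zero_var]
  have hv' : (v : ℝ) ≠ 0 := NNReal.coe_ne_zero.2 hv
  rw [integrable_gaussianReal_iff hv] at hf hf' hxf
  have hparts := integral_mul_deriv_eq_deriv_mul_of_integrable (fun x _ ↦ hderiv x)
    (fun x _ ↦ hasDerivAt_gaussianPDFReal m hv x)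
    ((hxf.const_mul (-(v : ℝ)⁻¹)).congr (ae_of_all _ fun x ↦ by simp only [Pi.mul_apply]; ring))
    (hf'.congr (ae_of_all _ fun x ↦ mul_comm _ _)) (hf.congr (ae_of_all _ fun x ↦ mul_comm _ _))
  simp only [integral_gaussianReal_eq_integral_smul hv, smul_eq_mul]
  calc ∫ x, gaussianPDFReal m v x * ((x - m) * f x)
      = -v * ∫ x, f x * (-((x - m) / v) * gaussianPDFReal m v x) := by
        rw [← integral_const_mul]
        congr 1 with x
        field_simp
    _ = v * ∫ x, gaussianPDFReal m v x * f' x := by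
        rw [hparts, neg_mul_neg]
        simp only [mul_comm]

variable {Ω : Type*} [MeasurableSpace Ω] {μ : Measure Ω}

lemma integral_sub_mul_of_indepFun {E : Type*} [MeasurableSpace E] {X : Ω → ℝ} {Y : Ω → E}
    (hX : HasGaussianLaw X μ) (hY : AEMeasurable Y μ) (hXY : X ⟂ᵢ[μ] Y) {F F' : ℝ × E → ℝ}
    (hderiv : ∀ x y, HasDerivAt (fun x ↦ F (x, y)) (F' (x, y)) x)
    (hFm : Measurable F) (hFm' : Measurable F')
    (hF : Integrable (fun ω ↦ F (X ω, Y ω)) μ) (hF' : Integrable (fun ω ↦ F' (X ω, Y ω)) μ)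
    (hXF : Integrable (fun ω ↦ (X ω - μ[X]) * F (X ω, Y ω)) μ) :
    ∫ ω, (X ω - μ[X]) * F (X ω, Y ω) ∂μ = Var[X; μ] * ∫ ω, F' (X ω, Y ω) ∂μ := by
  have := hX.isProbabilityMeasure
  have hpair : AEMeasurable (fun ω ↦ (X ω, Y ω)) μ := hX.aemeasurable.prodMk hY
  set m := μ[X]
  set ν := μ.map Y
  have : IsProbabilityMeasure ν := Measure.isProbabilityMeasure_map hY
  have hlaw : μ.map (fun ω ↦ (X ω, Y ω)) = (gaussianReal m Var[X; μ].toNNReal).prod ν := by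
    rw [hXY.map_prod_eq_prod_map_map hX.aemeasurable hY, hX.map_eq_gaussianReal]
  have hXFm : Measurable fun z : ℝ × E ↦ (z.1 - m) * F z := by fun_prop
  have integrable_law {g : ℝ × E → ℝ} (hg : Measurable g)
      (hgi : Integrable (fun ω ↦ g (X ω, Y ω)) μ) :
      Integrable g ((gaussianReal m Var[X; μ].toNNReal).prod ν) := by
    rw [← hlaw]
    exact (integrable_map_measure hg.aestronglyMeasurable hpair).2 hgi
  have integral_law {g : ℝ × E → ℝ} (hg : Measurable g)
      (hgi : Integrable (fun ω ↦ g (X ω, Y ω)) μ) :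
      ∫ ω, g (X ω, Y ω) ∂μ = ∫ y, ∫ x, g (x, y) ∂gaussianReal m Var[X; μ].toNNReal ∂ν := by
    rw [← integral_prod_symm g (integrable_law hg hgi), ← hlaw,
      integral_map hpair hg.aestronglyMeasurable]
  rw [integral_law hXFm hXF, integral_law hFm' hF', ← integral_const_mul]
  refine integral_congr_ae ?_
  filter_upwards [(integrable_law hFm hF).prod_left_ae, (integrable_law hFm' hF').prod_left_ae,
    (integrable_law hXFm hXF).prod_left_ae] with y hy hy' hxy
  rw [integral_sub_mul_gaussianReal (hderiv · y) hy hy' hxy,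
    Real.coe_toNNReal _ (variance_nonneg X μ)]

lemma memLp_prod_of_forall_memLp [IsFiniteMeasure μ] {τ : Type*} {X : τ → Ω → ℝ}
    (hX : ∀ p, ∀ q : ℝ≥0∞, q ≠ ∞ → MemLp (X p) q μ) (S : Finset τ) {q : ℝ≥0∞} (hq : q ≠ ∞) :
    MemLp (fun ω ↦ ∏ p ∈ S, X p ω) q μ := by
  have hprod := MemLp.prod' (s := S) (p := fun _ ↦ q * S.card) fun p _ ↦
    hX p _ (ENNReal.mul_ne_top hq (ENNReal.natCast_ne_top _))
  refine hprod.mono_exponent ?_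
  rw [Finset.sum_const, nsmul_eq_mul, ENNReal.le_inv_iff_mul_le, ← mul_assoc]
  exact ENNReal.mul_inv_le_one _

lemma covariance_eq_zero_of_variance_eq_zero [IsProbabilityMeasure μ] {X Y : Ω → ℝ}
    (hX : MemLp X 2 μ) (hvar : Var[X; μ] = 0) : cov[X, Y; μ] = 0 := by
  refine integral_eq_zero_of_ae ?_
  filter_upwards [ae_eq_integral_of_variance_eq_zero hX hvar] with ω hω
  simp [hω]

variable {τ : Type*} [Finite τ] {X : τ → Ω → ℝ}

lemma indepFun_sub_const_mul_of_hasGaussianLaw (hX : HasGaussianLaw (fun ω p ↦ X p ω) μ) {a : τ}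
    {c : τ → ℝ} (hc : ∀ p, c p * Var[X a; μ] = cov[X a, X p; μ]) :
    X a ⟂ᵢ[μ] fun ω p ↦ X p ω - c p * X a ω := by
  cases nonempty_fintype τ
  have := hX.isProbabilityMeasure
  have hL2 p : MemLp (X p) 2 μ := (hX.eval p).memLp_two
  have hpair : HasGaussianLaw (fun ω ↦ (fun _ : Unit ↦ X a ω, fun p ↦ X p ω - c p * X a ω)) μ := by
    let coord := ContinuousLinearMap.proj (R := ℝ) (φ := fun _ : τ ↦ ℝ)
    let L : (τ → ℝ) →L[ℝ] (Unit → ℝ) × (τ → ℝ) :=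
      (ContinuousLinearMap.pi fun _ ↦ coord a).prod (.pi fun p ↦ coord p - c p • coord a)
    exact hX.map_fun L
  refine (hpair.indepFun_of_covariance_eval fun _ p ↦ ?_).comp
    (measurable_pi_apply ()) measurable_id
  rw [covariance_fun_sub_right (hL2 a) (hL2 p) ((hL2 a).const_mul _), covariance_const_mul_right,
    covariance_self (hL2 a).aemeasurable, hc, sub_self]

variable [DecidableEq τ]

lemma integral_sub_mul_prod_of_hasGaussianLaw (hX : HasGaussianLaw (fun ω p ↦ X p ω) μ) (a : τ)
    (S : Finset τ) :
    ∫ ω, (X a ω - μ[X a]) * ∏ p ∈ S, (X p ω - μ[X p]) ∂μ =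
      ∑ q ∈ S, cov[X a, X q; μ] * ∫ ω, ∏ p ∈ S.erase q, (X p ω - μ[X p]) ∂μ := by
  cases nonempty_fintype τ
  have := hX.isProbabilityMeasure
  have hL2 p : MemLp (X p) 2 μ := (hX.eval p).memLp_two
  let c p := cov[X a, X p; μ] / Var[X a; μ]
  have hc p : c p * Var[X a; μ] = cov[X a, X p; μ] :=
    div_mul_cancel_of_imp (covariance_eq_zero_of_variance_eq_zero (hL2 a))
  let F (T : Finset τ) (z : ℝ × (τ → ℝ)) := ∏ p ∈ T, (z.2 p + c p * z.1 - μ[X p])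
  have hFm (T : Finset τ) : Measurable (F T) := by fun_prop
  have hF (T : Finset τ) (ω : Ω) :
      F T (X a ω, fun p ↦ X p ω - c p * X a ω) = ∏ p ∈ T, (X p ω - μ[X p]) := by
    simp only [F, sub_add_cancel]
  have hderiv x y : HasDerivAt (fun x ↦ F S (x, y)) (∑ q ∈ S, F (S.erase q) (x, y) * c q) x := by
    have hfactor p : HasDerivAt (fun x ↦ y p + c p * x - μ[X p]) (c p) x := by
      simpa using (((hasDerivAt_id x).const_mul (c p)).const_add (y p)).sub_const μ[X p]
    exact HasDerivAt.fun_finsetProd fun p _ ↦ hfactor p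
  have hY : AEMeasurable (fun ω p ↦ X p ω - c p * X a ω) μ :=
    aemeasurable_pi_lambda _ fun p ↦
      (hX.eval p).aemeasurable.sub ((hX.eval a).aemeasurable.const_mul _)
  have memLp_prod (T : Finset τ) : MemLp (fun ω ↦ ∏ p ∈ T, (X p ω - μ[X p])) 2 μ :=
    memLp_prod_of_forall_memLp (fun p q hq ↦ ((hX.eval p).memLp hq).sub (memLp_const _)) T (by simp)
  have integrable_prod (T : Finset τ) : Integrable (fun ω ↦ ∏ p ∈ T, (X p ω - μ[X p])) μ :=
    (memLp_prod T).integrable one_le_two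
  have hint : Integrable (fun ω ↦ (X a ω - μ[X a]) * ∏ p ∈ S, (X p ω - μ[X p])) μ :=
    ((hL2 a).sub (memLp_const _)).integrable_mul (memLp_prod S)
  have hparts := integral_sub_mul_of_indepFun (F := F S)
    (F' := fun z ↦ ∑ q ∈ S, F (S.erase q) z * c q) (hX.eval a) hY
    (indepFun_sub_const_mul_of_hasGaussianLaw hX hc) hderiv (hFm S) (by fun_prop)
    (by simpa only [hF] using integrable_prod S)
    (by simpa only [hF] using integrable_finsetSum _ fun q _ ↦ (integrable_prod _).mul_const _)
    (by simpa only [hF] using hint)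
  simp only [hF] at hparts
  rw [hparts, integral_finsetSum _ fun q _ ↦ (integrable_prod _).mul_const _, Finset.mul_sum]
  refine Finset.sum_congr rfl fun q _ ↦ ?_
  rw [integral_mul_const, ← hc]
  ring

end IntegrationByParts

section Wick

open ProbabilityTheory

variable {Ω : Type*} [MeasurableSpace Ω] {μ : Measure Ω}

theorem integral_prod_sub_eq_pairingSum {τ : Type*} [Fintype τ] [LinearOrder τ] {X : τ → Ω → ℝ}
    (hX : HasGaussianLaw (fun ω p ↦ X p ω) μ) (S : Finset τ) :
    ∫ ω, ∏ p ∈ S, (X p ω - μ[X p]) ∂μ = pairingSum (fun p q ↦ cov[X p, X q; μ]) S := by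
  have := hX.isProbabilityMeasure
  induction S using Finset.strongInduction with
  | H S ih =>
    obtain rfl | hS := S.eq_empty_or_nonempty
    · simp [pairingSum_empty]
    have ha : S.min' hS ∈ S := S.min'_mem hS
    simp only [← Finset.mul_prod_erase S _ ha]
    rw [integral_sub_mul_prod_of_hasGaussianLaw hX, pairingSum_eq_sum_erase _ ha S.min'_le]
    refine Finset.sum_congr rfl fun q _ ↦ ?_
    rw [ih _ ((Finset.erase_subset q _).trans_ssubset (Finset.erase_ssubset ha))]

end Wick

section ConditionalExpectation

open ProbabilityTheory

variable {Ω τ : Type*} {m mΩ : MeasurableSpace Ω} {μ : Measure Ω} [IsProbabilityMeasure μ]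

lemma condExp_add_of_indep (hm : m ≤ mΩ) {H R : Ω → ℝ} (hHm : StronglyMeasurable[m] H)
    (hH : Integrable H μ) (hRm : Measurable R) (hR : Integrable R μ)
    (hind : Indep (MeasurableSpace.comap R inferInstance) m μ) :
    μ[fun ω ↦ H ω + R ω | m] =ᵐ[μ] fun ω ↦ H ω + μ[R] := by
  have hRcond : μ[R | m] =ᵐ[μ] fun _ ↦ μ[R] :=
    condExp_indep_eq hRm.comap_le hm (comap_measurable R).stronglyMeasurable hind
  refine (condExp_add hH hR m).trans ?_
  rw [condExp_of_stronglyMeasurable hm hHm hH]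
  filter_upwards [hRcond] with ω hω
  rw [Pi.add_apply, hω]

lemma condExp_prod_sub_condExp_of_indep [Fintype τ] (hm : m ≤ mΩ) {X H R : τ → Ω → ℝ}
    (hX : ∀ p ω, X p ω = H p ω + R p ω) (hHm : ∀ p, StronglyMeasurable[m] (H p))
    (hH : ∀ p, Integrable (H p) μ) (hRm : ∀ p, Measurable (R p)) (hR : ∀ p, Integrable (R p) μ)
    (hind : Indep (MeasurableSpace.comap (fun ω p ↦ R p ω) inferInstance) m μ) :
    μ[fun ω ↦ ∏ p, (X p ω - μ[X p | m] ω) | m] =ᵐ[μ] fun _ ↦ ∫ ω, ∏ p, (R p ω - μ[R p]) ∂μ := by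
  have hRm' : Measurable fun ω p ↦ R p ω := measurable_pi_lambda _ hRm
  have hresidual p : ∀ᵐ ω ∂μ, X p ω - μ[X p | m] ω = R p ω - μ[R p] := by
    have hindp : Indep (MeasurableSpace.comap (R p) inferInstance) m μ :=
      indep_of_indep_of_le_left hind
        ((measurable_pi_apply p).comp (comap_measurable fun ω p ↦ R p ω)).comap_le
    rw [show X p = fun ω ↦ H p ω + R p ω from funext (hX p)]
    filter_upwards [condExp_add_of_indep hm (hHm p) (hH p) (hRm p) (hR p) hindp] with ω hω
    rw [hω, add_sub_add_left_eq_sub]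
  have hprod : (fun ω ↦ ∏ p, (X p ω - μ[X p | m] ω)) =ᵐ[μ] fun ω ↦ ∏ p, (R p ω - μ[R p]) := by
    filter_upwards [ae_all_iff.2 hresidual] with ω hω
    exact Finset.prod_congr rfl fun p _ ↦ hω p
  refine (condExp_congr_ae hprod).trans (condExp_indep_eq hRm'.comap_le hm ?_ hind)
  have hcont : Measurable fun r : τ → ℝ ↦ ∏ p, (r p - μ[R p]) := by fun_prop
  exact (hcont.comp (comap_measurable _)).stronglyMeasurable

end ConditionalExpectation

section LinearImages

open ProbabilityTheory

variable {Ω ι κ κ' : Type*} [MeasurableSpace Ω] {μ : Measure Ω} {u : Ω → ι → ℝ}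

/-- The covariance matrix of a random vector `u`, which lives in `ι → ℝ` rather than in
`EuclideanSpace ℝ ι` so that matrices act on it by `*ᵥ`. -/
noncomputable def covarianceMatrix (u : Ω → ι → ℝ) (μ : Measure Ω) : Matrix ι ι ℝ :=
  Matrix.of fun i j ↦ cov[fun ω ↦ u ω i, fun ω ↦ u ω j; μ]

lemma isSymm_covarianceMatrix (u : Ω → ι → ℝ) (μ : Measure Ω) : (covarianceMatrix u μ).IsSymm :=
  IsSymm.ext fun _ _ ↦ covariance_comm _ _

lemma covarianceMatrix_id_map (hu : AEMeasurable u μ) :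
    covarianceMatrix id (μ.map u) = covarianceMatrix u μ := by
  ext i j
  exact covariance_map_fun (measurable_pi_apply i).aestronglyMeasurable
    (measurable_pi_apply j).aestronglyMeasurable hu

variable [Fintype ι]

lemma hasGaussianLaw_mulVec (hu : HasGaussianLaw u μ) (M : Matrix κ ι ℝ) [Finite κ] :
    HasGaussianLaw (fun ω ↦ M *ᵥ u ω) μ := by
  cases nonempty_fintype κ
  exact hu.map_fun M.mulVecLin.toContinuousLinearMap

lemma covariance_dotProduct_dotProduct [IsFiniteMeasure μ]
    (hu : ∀ i, MemLp (fun ω ↦ u ω i) 2 μ) (x y : ι → ℝ) :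
    cov[fun ω ↦ x ⬝ᵥ u ω, fun ω ↦ y ⬝ᵥ u ω; μ] = x ⬝ᵥ covarianceMatrix u μ *ᵥ y := by
  simp only [dotProduct]
  rw [covariance_fun_sum_fun_sum (fun k ↦ (hu k).const_mul _) fun l ↦ (hu l).const_mul _]
  simp only [covariance_const_mul_left, covariance_const_mul_right, mulVec, dotProduct,
    covarianceMatrix, of_apply, Finset.mul_sum]
  refine Finset.sum_congr rfl fun k _ ↦ Finset.sum_congr rfl fun l _ ↦ by ring

lemma covariance_mulVec_mulVec [IsFiniteMeasure μ] (hu : ∀ i, MemLp (fun ω ↦ u ω i) 2 μ)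
    (M : Matrix κ ι ℝ) (M' : Matrix κ' ι ℝ) (i : κ) (j : κ') :
    cov[fun ω ↦ (M *ᵥ u ω) i, fun ω ↦ (M' *ᵥ u ω) j; μ] =
      (M * covarianceMatrix u μ * M'ᵀ) i j := by
  rw [Matrix.mul_assoc]
  exact covariance_dotProduct_dotProduct hu (M i) (M' j)

lemma indepFun_mulVec_mulVec [Finite κ] [Finite κ'] (hu : HasGaussianLaw u μ)
    {M : Matrix κ ι ℝ} {M' : Matrix κ' ι ℝ} (hM : M * covarianceMatrix u μ * M'ᵀ = 0) :
    (fun ω ↦ M *ᵥ u ω) ⟂ᵢ[μ] fun ω ↦ M' *ᵥ u ω := by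
  cases nonempty_fintype κ
  cases nonempty_fintype κ'
  have := hu.isProbabilityMeasure
  have hpair : HasGaussianLaw (fun ω ↦ (M *ᵥ u ω, M' *ᵥ u ω)) μ :=
    hu.map_fun (M.mulVecLin.toContinuousLinearMap.prod M'.mulVecLin.toContinuousLinearMap)
  refine hpair.indepFun_of_covariance_eval fun i j ↦ ?_
  rw [covariance_mulVec_mulVec fun k ↦ (hu.eval k).memLp_two, hM, Matrix.zero_apply]

end LinearImages

section Regression

variable {ι κ R : Type*} [Fintype ι] [DecidableEq ι] [Fintype κ] [CommRing R]
  {C : Matrix ι ι R} {G : Matrix κ ι R} {K : Matrix ι κ R}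

lemma one_sub_mul_mul_mul_transpose_eq_zero (hK : K * (G * C * Gᵀ) = C * Gᵀ) :
    (1 - K * G) * C * Gᵀ = 0 := by
  rw [Matrix.sub_mul, Matrix.one_mul, Matrix.sub_mul, ← hK]
  simp only [Matrix.mul_assoc, sub_self]

lemma one_sub_mul_mul_mul_one_sub_mul_transpose (hK : K * (G * C * Gᵀ) = C * Gᵀ) :
    (1 - K * G) * C * (1 - K * G)ᵀ = C - K * G * C := by
  rw [transpose_sub, transpose_mul, transpose_one, Matrix.mul_sub, Matrix.mul_one,
    ← Matrix.mul_assoc, one_sub_mul_mul_mul_transpose_eq_zero hK, Matrix.zero_mul, sub_zero,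
    Matrix.sub_mul, Matrix.one_mul]

end Regression

lemma eq_of_isSymm_of_dotProduct_mulVec_eq {ι R : Type*} [Fintype ι] [Field R]
    [NeZero (2 : R)] {M M' : Matrix ι ι R} (hM : M.IsSymm) (hM' : M'.IsSymm)
    (h : ∀ t, t ⬝ᵥ M *ᵥ t = t ⬝ᵥ M' *ᵥ t) : M = M' := by
  classical
  refine Matrix.toBilin'.injective (LinearMap.BilinForm.ext_of_isSymm
    (isSymm_toBilin'_iff_isSymm.2 hM) (isSymm_toBilin'_iff_isSymm.2 hM') fun t ↦ ?_)
  simpa only [toBilin'_apply'] using h t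

lemma isUnit_det_mul_mul_transpose {ι κ : Type*} [Fintype ι] [Fintype κ] [DecidableEq κ]
    {C : Matrix ι ι ℝ} (hC : C.PosDef) {G : Matrix κ ι ℝ} (hG : G.rank = Fintype.card κ) :
    IsUnit (G * C * Gᵀ).det := by
  have hrows : LinearIndependent ℝ G.row := by
    rw [linearIndependent_iff_card_eq_finrank_span, Set.finrank, ← rank_eq_finrank_span_row, hG]
  have hgram := hC.mul_mul_conjTranspose_same (B := G) (vecMul_injective_iff.2 hrows)
  exact (isUnit_iff_isUnit_det _).1 hgram.isUnit

section GaussianDensity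

open ProbabilityTheory
open scoped NNReal

lemma map_eq_gaussianReal_of_mgf {Ω : Type*} [MeasurableSpace Ω] {μ : Measure Ω}
    [IsProbabilityMeasure μ] {X : Ω → ℝ} (hX : AEMeasurable X μ) {m : ℝ} {v : ℝ≥0}
    (hmgf : mgf X μ = fun r ↦ exp (m * r + v * r ^ 2 / 2)) : μ.map X = gaussianReal m v := by
  rw [← mgf_id_gaussianReal] at hmgf
  have hexp : integrableExpSet X μ = Set.univ :=
    (integrableExpSet_eq_of_mgf hmgf).trans integrableExpSet_id_gaussianReal
  rw [← Measure.map_id (μ := gaussianReal m v)]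
  refine Measure.ext_of_complexMGF_eq hX aemeasurable_id (funext fun z ↦ ?_)
  exact eqOn_complexMGF_of_mgf hmgf (by simp [hexp])

variable {ι : Type*} [Fintype ι] {A : Matrix ι ι ℝ} {b : ι → ℝ}

/-- The unnormalized Gaussian density with precision matrix `A` and linear term `b`. -/
noncomputable def gaussianWeight (A : Matrix ι ι ℝ) (b s : ι → ℝ) : ℝ :=
  exp (-(1 / 2) * (s ⬝ᵥ A *ᵥ s) + b ⬝ᵥ s)

/-- The measure with density proportional to `gaussianWeight A b`. It is the zero measure when
the weight is not integrable, since the normalizing integral is then `0`. -/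
noncomputable def gaussianMeasure (A : Matrix ι ι ℝ) (b : ι → ℝ) : Measure (ι → ℝ) :=
  volume.withDensity fun s ↦
    ENNReal.ofReal ((∫ t, gaussianWeight A b t)⁻¹ * gaussianWeight A b s)

lemma exp_dotProduct_mul_gaussianWeight (A : Matrix ι ι ℝ) (b t s : ι → ℝ) :
    exp (t ⬝ᵥ s) * gaussianWeight A b s = gaussianWeight A (b + t) s := by
  rw [gaussianWeight, gaussianWeight, ← exp_add, add_dotProduct]
  ring_nf

lemma gaussianWeight_add_mulVec_add (hA : A.IsSymm) (b c s : ι → ℝ) :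
    gaussianWeight A (b + A *ᵥ c) (s + c) =
      exp (b ⬝ᵥ c + c ⬝ᵥ A *ᵥ c / 2) * gaussianWeight A b s := by
  have hsymm : c ⬝ᵥ A *ᵥ s = s ⬝ᵥ A *ᵥ c := by
    rw [dotProduct_mulVec, dotProduct_comm, ← mulVec_transpose, hA.eq]
  rw [gaussianWeight, gaussianWeight, ← exp_add]
  congr 1
  simp only [mulVec_add, dotProduct_add, add_dotProduct, hsymm, dotProduct_comm (A *ᵥ c)]
  ring

lemma integral_gaussianWeight_add_mulVec (hA : A.IsSymm) (b c : ι → ℝ) :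
    ∫ s, gaussianWeight A (b + A *ᵥ c) s =
      exp (b ⬝ᵥ c + c ⬝ᵥ A *ᵥ c / 2) * ∫ s, gaussianWeight A b s := by
  rw [← integral_add_right_eq_self _ c, ← integral_const_mul]
  simp only [gaussianWeight_add_mulVec_add hA]

lemma integral_gaussianMeasure (A : Matrix ι ι ℝ) (b : ι → ℝ) (f : (ι → ℝ) → ℝ) :
    ∫ s, f s ∂gaussianMeasure A b =
      (∫ s, gaussianWeight A b s)⁻¹ * ∫ s, f s * gaussianWeight A b s := by
  have hnonneg s : 0 ≤ (∫ t, gaussianWeight A b t)⁻¹ * gaussianWeight A b s :=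
    mul_nonneg (inv_nonneg.2 (integral_nonneg fun t ↦ (exp_pos _).le)) (exp_pos _).le
  have hmeas : Measurable (gaussianWeight A b) := by
    unfold gaussianWeight
    fun_prop
  rw [gaussianMeasure, integral_withDensity_eq_integral_toReal_smul (by fun_prop)
    (ae_of_all _ fun _ ↦ ENNReal.ofReal_lt_top), ← integral_const_mul]
  simp only [ENNReal.toReal_ofReal (hnonneg _), smul_eq_mul]
  congr 1 with s
  ring

lemma integral_gaussianWeight_ne_zero (A : Matrix ι ι ℝ) (b : ι → ℝ)
    [IsProbabilityMeasure (gaussianMeasure A b)] : ∫ s, gaussianWeight A b s ≠ 0 := by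
  intro h
  simpa [h] using integral_gaussianMeasure A b fun _ ↦ 1

lemma integral_exp_dotProduct_gaussianMeasure [IsProbabilityMeasure (gaussianMeasure A b)]
    (hA : A.IsSymm) (c : ι → ℝ) :
    ∫ s, exp ((A *ᵥ c) ⬝ᵥ s) ∂gaussianMeasure A b = exp (b ⬝ᵥ c + c ⬝ᵥ A *ᵥ c / 2) := by
  simp only [integral_gaussianMeasure, exp_dotProduct_mul_gaussianWeight,
    integral_gaussianWeight_add_mulVec hA]
  field [integral_gaussianWeight_ne_zero A b]

variable [IsProbabilityMeasure (gaussianMeasure A b)]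

lemma map_dotProduct_gaussianMeasure [DecidableEq ι] (hA : A.PosDef) (t : ι → ℝ) :
    (gaussianMeasure A b).map (t ⬝ᵥ ·) =
      gaussianReal (b ⬝ᵥ A⁻¹ *ᵥ t) (t ⬝ᵥ A⁻¹ *ᵥ t).toNNReal := by
  have hvar : 0 ≤ t ⬝ᵥ A⁻¹ *ᵥ t := hA.inv.posSemidef.dotProduct_mulVec_nonneg t
  have hcancel : A *ᵥ (A⁻¹ *ᵥ t) = t := by
    rw [mulVec_mulVec, mul_nonsing_inv _ ((isUnit_iff_isUnit_det A).1 hA.isUnit), one_mulVec]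
  refine map_eq_gaussianReal_of_mgf (by fun_prop) (funext fun r ↦ ?_)
  have hexp := integral_exp_dotProduct_gaussianMeasure (b := b)
    (isHermitian_iff_isSymm.1 hA.isHermitian) (r • (A⁻¹ *ᵥ t))
  simp only [mulVec_smul, hcancel, smul_dotProduct, dotProduct_smul, smul_eq_mul] at hexp
  rw [mgf, hexp, Real.coe_toNNReal _ hvar, dotProduct_comm (A⁻¹ *ᵥ t)]
  ring_nf

lemma isGaussian_gaussianMeasure (hA : A.PosDef) : IsGaussian (gaussianMeasure A b) := by
  classical
  refine isGaussian_of_map_eq_gaussianReal fun L ↦ ?_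
  obtain ⟨t, ht⟩ := (dotProductEquiv ℝ ι).surjective L.toLinearMap
  have hL : ⇑L = (t ⬝ᵥ ·) := funext fun s ↦ (LinearMap.congr_fun ht s).symm
  rw [hL]
  exact ⟨_, _, map_dotProduct_gaussianMeasure hA _⟩

lemma variance_dotProduct_gaussianMeasure [DecidableEq ι] (hA : A.PosDef) (t : ι → ℝ) :
    Var[(t ⬝ᵥ ·); gaussianMeasure A b] = t ⬝ᵥ A⁻¹ *ᵥ t := by
  have hvar : 0 ≤ t ⬝ᵥ A⁻¹ *ᵥ t := hA.inv.posSemidef.dotProduct_mulVec_nonneg t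
  rw [← variance_id_map (by fun_prop), map_dotProduct_gaussianMeasure hA, variance_id_gaussianReal,
    Real.coe_toNNReal _ hvar]

lemma covarianceMatrix_gaussianMeasure [DecidableEq ι] (hA : A.PosDef) :
    covarianceMatrix id (gaussianMeasure A b) = A⁻¹ := by
  have := isGaussian_gaussianMeasure (b := b) hA
  have hL2 i : MemLp (fun s : ι → ℝ ↦ id s i) 2 (gaussianMeasure A b) :=
    (IsGaussian.hasGaussianLaw_id.eval i).memLp_two
  refine eq_of_isSymm_of_dotProduct_mulVec_eq (isSymm_covarianceMatrix _ _)
    (isHermitian_iff_isSymm.1 hA.inv.isHermitian) fun t ↦ ?_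
  rw [← variance_dotProduct_gaussianMeasure (b := b) hA, ← covariance_dotProduct_dotProduct hL2,
    covariance_self (by fun_prop)]
  rfl

end GaussianDensity

section LawFromDensity

open ProbabilityTheory

variable {Ω ι : Type*} [MeasurableSpace Ω] {μ : Measure Ω} [IsProbabilityMeasure μ] [Fintype ι]
  {A : Matrix ι ι ℝ} {b : ι → ℝ} {u : Ω → ι → ℝ}

lemma hasGaussianLaw_of_map_eq_gaussianMeasure (hA : A.PosDef) (hu : AEMeasurable u μ)
    (hlaw : μ.map u = gaussianMeasure A b) : HasGaussianLaw u μ := by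
  have : IsProbabilityMeasure (gaussianMeasure A b) := hlaw ▸ Measure.isProbabilityMeasure_map hu
  exact ⟨hlaw ▸ isGaussian_gaussianMeasure hA⟩

lemma covarianceMatrix_of_map_eq_gaussianMeasure [DecidableEq ι] (hA : A.PosDef)
    (hu : AEMeasurable u μ) (hlaw : μ.map u = gaussianMeasure A b) :
    covarianceMatrix u μ = A⁻¹ := by
  have : IsProbabilityMeasure (gaussianMeasure A b) := hlaw ▸ Measure.isProbabilityMeasure_map hu
  rw [← covarianceMatrix_id_map hu, hlaw, covarianceMatrix_gaussianMeasure hA]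

end LawFromDensity

section ConditionedWick

open ProbabilityTheory

variable {Ω ι κ τ : Type*} [MeasurableSpace Ω] {μ : Measure Ω} {u : Ω → ι → ℝ}
  [Fintype ι] [Fintype κ] [Fintype τ] [LinearOrder τ]

/-- The normal equations `hK` say that `K V` is the best linear predictor of `u` from `V = G u`. -/
theorem stmt2_general (hu : Measurable u) (hgauss : HasGaussianLaw u μ) (G : Matrix κ ι ℝ)
    (K : Matrix ι κ ℝ)
    (hK : K * (G * covarianceMatrix u μ * Gᵀ) = covarianceMatrix u μ * Gᵀ) (idx : τ → ι) :
    μ[fun ω ↦ ∏ p, (u ω (idx p) -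
        μ[fun ω' ↦ u ω' (idx p) | MeasurableSpace.comap (fun ω' ↦ G *ᵥ u ω') inferInstance] ω) |
        MeasurableSpace.comap (fun ω' ↦ G *ᵥ u ω') inferInstance]
      =ᵐ[μ] fun _ ↦ pairingSum
        (fun p q ↦ (covarianceMatrix u μ - K * G * covarianceMatrix u μ) (idx p) (idx q))
        Finset.univ := by
  classical
  have := hgauss.isProbabilityMeasure
  let T : Matrix ι ι ℝ := 1 - K * G
  have hV : Measurable fun ω ↦ G *ᵥ u ω := by fun_prop
  have hR : HasGaussianLaw (fun ω p ↦ (T *ᵥ u ω) (idx p)) μ :=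
    hasGaussianLaw_mulVec hgauss (T.submatrix idx id)
  have hH p : Integrable (fun ω ↦ (K *ᵥ (G *ᵥ u ω)) (idx p)) μ :=
    ((hasGaussianLaw_mulVec (hasGaussianLaw_mulVec hgauss G) K).eval (idx p)).integrable
  have hHm p : StronglyMeasurable[MeasurableSpace.comap (fun ω ↦ G *ᵥ u ω) inferInstance]
      fun ω ↦ (K *ᵥ (G *ᵥ u ω)) (idx p) := by
    have hK_meas : Measurable fun v : κ → ℝ ↦ (K *ᵥ v) (idx p) := by fun_prop
    exact (hK_meas.comp (comap_measurable _)).stronglyMeasurable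
  have hdecomp p ω : u ω (idx p) = (K *ᵥ (G *ᵥ u ω)) (idx p) + (T *ᵥ u ω) (idx p) := by
    rw [sub_mulVec, one_mulVec, mulVec_mulVec, Pi.sub_apply, add_sub_cancel]
  have hindep : (fun ω p ↦ (T *ᵥ u ω) (idx p)) ⟂ᵢ[μ] fun ω ↦ G *ᵥ u ω :=
    (indepFun_mulVec_mulVec hgauss (one_sub_mul_mul_mul_transpose_eq_zero hK)).comp
      (φ := fun (r : ι → ℝ) p ↦ r (idx p)) (by fun_prop) measurable_id
  refine (condExp_prod_sub_condExp_of_indep hV.comap_le hdecomp hHm hH (fun p ↦ by fun_prop)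
    (fun p ↦ (hR.eval p).integrable) hindep).trans (.of_eq ?_)
  simp only [integral_prod_sub_eq_pairingSum hR,
    covariance_mulVec_mulVec fun k ↦ (hgauss.eval k).memLp_two,
    T, one_sub_mul_mul_mul_one_sub_mul_transpose hK]

end ConditionedWick

/-- Wick's theorem for conditioned expectations.  For a nondegenerate
Gaussian vector `u` with density `Z⁻¹ exp(-½(s,As) + b·s)` and collective
variables `V = Gu`, the conditional expectation of the product
`∏_p (u_{i_p} − E[u_{i_p}|V])` given `V` is a.s. `0` when `P` is odd, and the sum
over all pairings (encoded as fixed-point-free involutions `σ` of `Fin P`, the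
product being taken over the pairs `{x, σ x}` with `x < σ x`) of products of
entries of the conditional covariance matrix
`Σ^V = A⁻¹ − A⁻¹Gᵀ(GA⁻¹Gᵀ)⁻¹GA⁻¹` when `P` is even. -/
theorem stmt2 {Ω : Type*} [MeasureSpace Ω] [IsProbabilityMeasure (ℙ : Measure Ω)]
    {n N : ℕ} (hN : 1 ≤ N) (hNn : N < n)
    (A : Matrix (Fin n) (Fin n) ℝ) (hA : A.PosDef)
    (b : Fin n → ℝ)
    (G : Matrix (Fin N) (Fin n) ℝ) (hG : G.rank = N)
    (u : Ω → Fin n → ℝ) (hu : Measurable u)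
    (hlaw : Measure.map u ℙ = volume.withDensity (fun s =>
      ENNReal.ofReal ((∫ t : Fin n → ℝ,
          Real.exp (-(1/2) * (t ⬝ᵥ A.mulVec t) + b ⬝ᵥ t))⁻¹ *
        Real.exp (-(1/2) * (s ⬝ᵥ A.mulVec s) + b ⬝ᵥ s))))
    (P : ℕ) (idx : Fin P → Fin n) :
    (ℙ[(fun ω => ∏ p : Fin P,
        (u ω (idx p) - (ℙ[(fun ω' => u ω' (idx p)) |
            MeasurableSpace.comap (fun ω' => G.mulVec (u ω')) inferInstance]) ω)) |
        MeasurableSpace.comap (fun ω' => G.mulVec (u ω')) inferInstance])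
      =ᵐ[ℙ] fun _ =>
        if Odd P then 0 else
          ∑ σ ∈ Finset.univ.filter
              (fun σ : Equiv.Perm (Fin P) => ∀ x, σ (σ x) = x ∧ σ x ≠ x),
            ∏ x ∈ Finset.univ.filter (fun x : Fin P => x < σ x),
              (A⁻¹ - A⁻¹ * Gᵀ * (G * A⁻¹ * Gᵀ)⁻¹ * G * A⁻¹) (idx x) (idx (σ x)) := by
  have hcov : covarianceMatrix u ℙ = A⁻¹ :=
    covarianceMatrix_of_map_eq_gaussianMeasure hA hu.aemeasurable hlaw
  have hgram : IsUnit (G * A⁻¹ * Gᵀ).det := isUnit_det_mul_mul_transpose hA.inv (by simpa using hG)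
  have hK : A⁻¹ * Gᵀ * (G * A⁻¹ * Gᵀ)⁻¹ * (G * covarianceMatrix u ℙ * Gᵀ) =
      covarianceMatrix u ℙ * Gᵀ := by
    rw [hcov, nonsing_inv_mul_cancel_right _ _ hgram]
  have hgauss := hasGaussianLaw_of_map_eq_gaussianMeasure hA hu.aemeasurable hlaw
  have hwick := stmt2_general hu hgauss G _ hK idx
  simp only [hcov, pairingSum_univ, Fintype.card_fin] at hwick
  convert! hwick
end

section
/- If C is a Hermitian positive-definite n×n complex matrix, G is a complex N×n matrix with G G† = (1/n) I_N, and the rows of G are eigenvector-like for C in the sense that G C = D G for some Hermitian N×N matrix D, then G C G† = (1/n) D, this matrix is positive definite (hence invertible), and the regression matrix satisfies Q = C G† (G C G†)⁻¹ = n G†. -/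
open Matrix
open scoped ComplexOrder

/-!
Taking adjoints in `G C = D G` gives `C G† = G† D†`: the range of `G†` is invariant under `C`.
Since `G G†` is a scalar `c`, both `c D` and `c D†` equal `G C G†`, so `C G†` equals
`c⁻¹ G† (G C G†)`, and the inverse in the regression matrix cancels, leaving `c⁻¹ G†`.
Invertibility of `G G†` makes `x ↦ x G` injective, which carries positivity from `C` to `G C G†`.
-/

section Semiring

variable {m n R : Type*} [Fintype m] [Fintype n] [DecidableEq m]

theorem vecMul_injective_of_isUnit_mul [Semiring R] {A : Matrix m n R} {B : Matrix n m R}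
    (hAB : IsUnit (A * B)) : Function.Injective A.vecMul := by
  have hcomp : Function.Injective ((· ᵥ* B) ∘ (· ᵥ* A)) := by
    simpa only [Function.comp_def, vecMul_vecMul] using vecMul_injective_of_isUnit hAB
  exact hcomp.of_comp

variable [CommSemiring R] {C : Matrix n n R} {G : Matrix m n R} {H : Matrix n m R}
  {D : Matrix m m R} {c : R}

theorem mul_mul_eq_smul_of_mul_eq_mul_left (hGH : G * H = c • (1 : Matrix m m R))
    (hGC : G * C = D * G) : G * C * H = c • D := by
  rw [hGC, Matrix.mul_assoc, hGH, Matrix.mul_smul, Matrix.mul_one]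

theorem mul_mul_eq_smul_of_mul_eq_mul_right (hGH : G * H = c • (1 : Matrix m m R))
    (hCH : C * H = H * D) : G * C * H = c • D := by
  rw [Matrix.mul_assoc, hCH, ← Matrix.mul_assoc, hGH, Matrix.smul_mul, Matrix.one_mul]

end Semiring

theorem mul_conjTranspose_eq_of_mul_eq_mul {m n R : Type*} [Fintype m] [Fintype n]
    [NonUnitalSemiring R] [StarRing R] {C : Matrix n n R} {G : Matrix m n R} {D : Matrix m m R}
    (hC : C.IsHermitian) (hGC : G * C = D * G) : C * Gᴴ = Gᴴ * Dᴴ := by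
  simpa only [conjTranspose_mul, hC.eq] using congrArg conjTranspose hGC

section Field

variable {m n K : Type*} [Fintype m] [Fintype n] [DecidableEq m] [Field K]
  {C : Matrix n n K} {G : Matrix m n K} {D : Matrix m m K} {c : K}

theorem mul_mul_inv_eq_inv_smul {H : Matrix n m K} (hc : c ≠ 0)
    (hGH : G * H = c • (1 : Matrix m m K)) (hCH : C * H = H * D) (hunit : IsUnit (G * C * H)) :
    C * H * (G * C * H)⁻¹ = c⁻¹ • H := by
  have hfactor : C * H = c⁻¹ • H * (G * C * H) := by
    rw [mul_mul_eq_smul_of_mul_eq_mul_right hGH hCH, Matrix.smul_mul, Matrix.mul_smul,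
      inv_smul_smul₀ hc, hCH]
  calc
    C * H * (G * C * H)⁻¹ = c⁻¹ • H * (G * C * H) * (G * C * H)⁻¹ := by rw [← hfactor]
    _ = c⁻¹ • H := mul_nonsing_inv_cancel_right _ _ ((isUnit_iff_isUnit_det _).mp hunit)

theorem stmt13_general [PartialOrder K] [StarRing K] (hC : C.PosDef) (hc : c ≠ 0)
    (hG : G * Gᴴ = c • (1 : Matrix m m K)) (hGC : G * C = D * G) :
    G * C * Gᴴ = c • D ∧ (G * C * Gᴴ).PosDef ∧ IsUnit (G * C * Gᴴ) ∧
      C * Gᴴ * (G * C * Gᴴ)⁻¹ = c⁻¹ • Gᴴ := by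
  have hGG : IsUnit (G * Gᴴ) := hG ▸ (Units.mk0 c hc • (1 : (Matrix m m K)ˣ)).isUnit
  have hpos : (G * C * Gᴴ).PosDef :=
    hC.mul_mul_conjTranspose_same (vecMul_injective_of_isUnit_mul hGG)
  have hCG : C * Gᴴ = Gᴴ * Dᴴ := mul_conjTranspose_eq_of_mul_eq_mul hC.isHermitian hGC
  exact ⟨mul_mul_eq_smul_of_mul_eq_mul_left hG hGC, hpos, hpos.isUnit,
    mul_mul_inv_eq_inv_smul hc hG hCG hpos.isUnit⟩

end Field

/-- If `C` is Hermitian positive definite, `G G† = (1/n) I_N`, and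
`G C = D G` with `D` Hermitian, then `G C G† = (1/n) D`, this matrix is positive
definite (hence invertible), and the regression matrix is
`Q = C G† (G C G†)⁻¹ = n G†`. -/
theorem stmt13 {n N : ℕ} (hN : 1 ≤ N) (hNn : N ≤ n)
    (C : Matrix (Fin n) (Fin n) ℂ) (hC : C.PosDef)
    (G : Matrix (Fin N) (Fin n) ℂ)
    (hG : G * G.conjTranspose = (1 / (n : ℂ)) • (1 : Matrix (Fin N) (Fin N) ℂ))
    (D : Matrix (Fin N) (Fin N) ℂ) (hD : D.IsHermitian)
    (hGC : G * C = D * G) :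
    G * C * G.conjTranspose = (1 / (n : ℂ)) • D ∧
    (G * C * G.conjTranspose).PosDef ∧
    IsUnit (G * C * G.conjTranspose) ∧
    C * G.conjTranspose * (G * C * G.conjTranspose)⁻¹ = (n : ℂ) • G.conjTranspose := by
  have hn : (n : ℂ) ≠ 0 := Nat.cast_ne_zero.mpr (by omega)
  simpa only [one_div, inv_inv] using stmt13_general hC (one_div_ne_zero hn) hG hGC
end

section
/- Under the same hypotheses (C Hermitian positive definite, G G† = (1/n) I_N, and G C = D G with D Hermitian), the conditional covariance matrix with Fourier-type kernels reduces to the Galerkin complement: C − C G† (G C G†)⁻¹ G C = (I − n G†G) C, where n G†G is the Galerkin projection onto the row space of G. -/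
open Matrix
open scoped ComplexOrder

/-!
If `G C = D G` and `C H = H E`, the compression `G C H = D (G H)` factors, so
`C H (G C H)⁻¹ G C = C H (G H)⁻¹ D⁻¹ D G = C P`
for the projection `P = H (G H)⁻¹ G`. The range and the kernel of `P` are both invariant under `C`,
so `C P = P C`. If `C` is Hermitian, conjugate transposition turns `G C = D G` into the second
relation for `H = Gᴴ`.
-/

theorem mul_smul_one_eq_one {R A : Type*} [Monoid R] [Monoid A] [MulAction R A]
    [IsScalarTower R A A] [SMulCommClass R A A] {a b : R} {x : A} (hx : x = a • 1)
    (hab : a * b = 1) : x * (b • 1) = 1 := by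
  rw [hx, smul_mul_smul_comm, hab, mul_one, one_smul]

section PetrovGalerkin

variable {m n R : Type*} [Fintype m] [DecidableEq m] [Fintype n] [CommRing R]
  {G : Matrix m n R} {H : Matrix n m R} {C : Matrix n n R} {D E : Matrix m m R}

/-- The Petrov–Galerkin projection: the projection onto the column space of `H` along the kernel
of `G`. The Galerkin projection is the case `H = Gᴴ`. If `G * H` is not
invertible, it is the zero matrix. -/
noncomputable def petrovGalerkinProjection (H : Matrix n m R) (G : Matrix m n R) : Matrix n n R :=
  H * (G * H)⁻¹ * G

theorem petrovGalerkinProjection_eq_smul {a b : R} (hGH : G * H = a • 1) (hab : a * b = 1) :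
    petrovGalerkinProjection H G = b • (H * G) := by
  rw [petrovGalerkinProjection, Matrix.inv_eq_right_inv (mul_smul_one_eq_one hGH hab),
    Matrix.mul_smul, Matrix.mul_one, Matrix.smul_mul]

theorem mul_inv_mul_eq_mul_petrovGalerkinProjection (hD : IsUnit D) (hGC : G * C = D * G) :
    C * H * (G * C * H)⁻¹ * (G * C) = C * petrovGalerkinProjection H G := by
  have hD' : IsUnit D.det := (Matrix.isUnit_iff_isUnit_det D).mp hD
  calc
    C * H * (G * C * H)⁻¹ * (G * C) = C * H * ((G * H)⁻¹ * D⁻¹) * (D * G) := by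
      rw [hGC, Matrix.mul_assoc D, Matrix.mul_inv_rev]
    _ = C * H * (G * H)⁻¹ * (D⁻¹ * (D * G)) := by simp only [Matrix.mul_assoc]
    _ = C * petrovGalerkinProjection H G := by
      rw [Matrix.nonsing_inv_mul_cancel_left _ _ hD', petrovGalerkinProjection]
      simp only [Matrix.mul_assoc]

theorem commute_petrovGalerkinProjection (hGH : IsUnit (G * H)) (hGC : G * C = D * G)
    (hCH : C * H = H * E) : Commute C (petrovGalerkinProjection H G) := by
  have hGH' : IsUnit (G * H).det := (Matrix.isUnit_iff_isUnit_det _).mp hGH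
  have hconj : G * H * E = D * (G * H) := by
    rw [Matrix.mul_assoc, ← hCH, ← Matrix.mul_assoc, hGC, Matrix.mul_assoc]
  have hinv : E * (G * H)⁻¹ = (G * H)⁻¹ * D := by
    rw [← Matrix.nonsing_inv_mul_cancel_left _ E hGH', hconj, Matrix.mul_assoc,
      Matrix.mul_nonsing_inv_cancel_right _ _ hGH']
  calc
    C * (H * (G * H)⁻¹ * G) = H * (E * (G * H)⁻¹) * G := by
      simp only [← Matrix.mul_assoc, hCH]
    _ = H * (G * H)⁻¹ * G * C := by
      rw [hinv, Matrix.mul_assoc _ G, hGC]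
      simp only [Matrix.mul_assoc]

theorem isUnit_mul_mul_of_mul_eq_mul [DecidableEq n] (hC : IsUnit C) (hGH : IsUnit (G * H))
    (hGC : G * C = D * G) : IsUnit (G * C * H) := by
  have hC' : IsUnit C.det := (Matrix.isUnit_iff_isUnit_det C).mp hC
  have hfactor : D * (G * C⁻¹ * H) = G * H := by
    rw [← Matrix.mul_assoc, ← Matrix.mul_assoc, ← hGC, Matrix.mul_nonsing_inv_cancel_right _ _ hC']
  have hD : IsUnit D := (IsUnit.mul_iff.mp (hfactor ▸ hGH)).1
  rw [hGC, Matrix.mul_assoc]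
  exact hD.mul hGH

theorem stmt14_general [DecidableEq n] (hGCH : IsUnit (G * C * H)) (hGC : G * C = D * G)
    (hCH : C * H = H * E) :
    C - C * H * (G * C * H)⁻¹ * (G * C) = (1 - petrovGalerkinProjection H G) * C := by
  obtain ⟨hD, hGH⟩ : IsUnit D ∧ IsUnit (G * H) := by
    rwa [← IsUnit.mul_iff, ← Matrix.mul_assoc, ← hGC]
  rw [mul_inv_mul_eq_mul_petrovGalerkinProjection hD hGC,
    commute_petrovGalerkinProjection hGH hGC hCH, Matrix.sub_mul, Matrix.one_mul]

end PetrovGalerkin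

theorem mul_conjTranspose_eq_of_mul_eq {m n R : Type*} [Fintype m] [Fintype n]
    [NonUnitalSemiring R] [StarRing R] {G : Matrix m n R} {C : Matrix n n R} {D : Matrix m m R}
    (hC : C.IsHermitian) (hGC : G * C = D * G) : C * Gᴴ = Gᴴ * Dᴴ := by
  simpa only [conjTranspose_mul, hC.eq] using congrArg conjTranspose hGC

/-- Under the same hypotheses (`C` Hermitian positive definite,
`G G† = (1/n) I_N`, `G C = D G` with `D` Hermitian), the conditional covariance
matrix reduces to the Galerkin complement:
`C − C G†(G C G†)⁻¹ G C = (I − n G†G) C`. -/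
theorem stmt14 {n N : ℕ} (hN : 1 ≤ N) (hNn : N ≤ n)
    (C : Matrix (Fin n) (Fin n) ℂ) (hC : C.PosDef)
    (G : Matrix (Fin N) (Fin n) ℂ)
    (hG : G * G.conjTranspose = (1 / (n : ℂ)) • (1 : Matrix (Fin N) (Fin N) ℂ))
    (D : Matrix (Fin N) (Fin N) ℂ) (hD : D.IsHermitian)
    (hGC : G * C = D * G) :
    C - C * G.conjTranspose * (G * C * G.conjTranspose)⁻¹ * (G * C)
      = ((1 : Matrix (Fin n) (Fin n) ℂ) - (n : ℂ) • (G.conjTranspose * G)) * C := by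
  have hn : 1 / (n : ℂ) * n = 1 := one_div_mul_cancel (Nat.cast_ne_zero.mpr (by lia))
  have hGG : IsUnit (G * Gᴴ) := .of_mul_eq_one _ (mul_smul_one_eq_one hG hn)
  rw [stmt14_general (isUnit_mul_mul_of_mul_eq_mul hC.isUnit hGG hGC) hGC
      (mul_conjTranspose_eq_of_mul_eq hC.isHermitian hGC),
    petrovGalerkinProjection_eq_smul hG hn]
end
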